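/- arXiv:1004.0646 — 3 statements merged into one kernel-verified Lean document; each statement's English description precedes it below -/
import Mathlib

section
/- Let D = {(u₁, u₂) ∈ ℝ² : 0 < u₁² + u₂² < 1} and let μ be the uniform probability measure on D (normalized two-dimensional Lebesgue measure restricted to D). Define T : D → ℝ² by T(u₁, u₂) = (u₁·√(−2·ln(s)/s), u₂·√(−2·ln(s)/s)) where s = u₁² + u₂². Then the pushforward measure T_*μ equals the standard two-dimensional Gaussian measure on ℝ², i.e. the product of two Gaussian measures on ℝ each with mean 0 and variance 1. (This is the correctness of Marsaglia's polar method: a uniform sample on the punctured unit disk is transformed into a pair of independent standard Normal samples.) -/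
open MeasureTheory ProbabilityTheory

open scoped ENNReal in
lemma marsaglia_one_dim (h : ℝ → ℝ≥0∞) :
    ∫⁻ r in Set.Ioo (0:ℝ) 1, ENNReal.ofReal r * h (Real.sqrt (-2 * Real.log (r ^ 2))) =
    ∫⁻ ρ in Set.Ioi (0:ℝ), ENNReal.ofReal ρ * (ENNReal.ofReal (Real.exp (-ρ^2/2) / 2) * h ρ) := by
  have himg : (fun ρ : ℝ => Real.exp (-ρ^2/4)) '' Set.Ioi 0 = Set.Ioo (0:ℝ) 1 := by
    ext r
    constructor
    · rintro ⟨ρ, hρ, rfl⟩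
      have hρ : 0 < ρ := hρ
      refine ⟨Real.exp_pos _, ?_⟩
      rw [Real.exp_lt_one_iff]
      nlinarith [sq_pos_of_pos hρ]
    · rintro ⟨h0, h1⟩
      have hl := Real.log_neg h0 h1
      refine ⟨Real.sqrt (-4 * Real.log r), Real.sqrt_pos.2 (by linarith), ?_⟩
      simp only
      rw [Real.sq_sqrt (by linarith)]
      rw [show -(-4 * Real.log r) / 4 = Real.log r by ring, Real.exp_log h0]
  have hd : ∀ x ∈ Set.Ioi (0:ℝ), HasDerivWithinAt (fun ρ : ℝ => Real.exp (-ρ^2/4))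
      (Real.exp (-x^2/4) * (-x/2)) (Set.Ioi 0) x := by
    intro x _
    have h1 : HasDerivAt (fun ρ : ℝ => -ρ^2/4) (-x/2) x := by
      have := ((hasDerivAt_pow 2 x).neg).div_const 4
      exact this.congr_deriv (by push_cast; ring)
    exact h1.exp.hasDerivWithinAt
  have hinj : Set.InjOn (fun ρ : ℝ => Real.exp (-ρ^2/4)) (Set.Ioi 0) := by
    intro a ha b hb hab
    have ha : 0 < a := ha
    have hb : 0 < b := hb
    have h2 := Real.exp_injective hab
    have h3 : a ^ 2 = b ^ 2 := by linarith
    exact (pow_left_inj₀ ha.le hb.le two_ne_zero).1 h3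
  rw [← himg, lintegral_image_eq_lintegral_abs_deriv_mul measurableSet_Ioi hd hinj]
  refine setLIntegral_congr_fun measurableSet_Ioi fun ρ hρ => ?_
  have hρ : 0 < ρ := hρ
  have e1 : Real.sqrt (-2 * Real.log (Real.exp (-ρ^2/4) ^ 2)) = ρ := by
    rw [Real.log_pow, Real.log_exp]
    rw [show -2 * (((2:ℕ):ℝ) * (-ρ^2/4)) = ρ ^ 2 by push_cast; ring, Real.sqrt_sq hρ.le]
  rw [e1, ← mul_assoc, ← mul_assoc, ← ENNReal.ofReal_mul (abs_nonneg _),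
    ← ENNReal.ofReal_mul hρ.le]
  congr 2
  rw [abs_mul, abs_of_pos (Real.exp_pos _), abs_of_neg (by linarith : -ρ/2 < 0),
    show -ρ^2/2 = -ρ^2/4 + -ρ^2/4 by ring, Real.exp_add]
  ring

open scoped ENNReal in
lemma lintegral_polar (f : ℝ × ℝ → ℝ≥0∞) (hf : Measurable f) :
    ∫⁻ p, f p = ∫⁻ θ in Set.Ioo (-Real.pi) Real.pi, ∫⁻ r in Set.Ioi (0:ℝ),
      ENNReal.ofReal r * f (r * Real.cos θ, r * Real.sin θ) := by
  rw [← lintegral_comp_polarCoord_symm, polarCoord_target, Measure.volume_eq_prod,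
    ← Measure.prod_restrict, lintegral_prod_symm']
  · simp
  · have : Measurable polarCoord.symm := continuous_polarCoord_symm.measurable
    simp only [smul_eq_mul]
    fun_prop

open scoped ENNReal in
lemma marsaglia_key (φ : ℝ × ℝ → ℝ≥0∞) (hφ : Measurable φ) :
    ∫⁻ p in {p : ℝ × ℝ | 0 < p.1 ^ 2 + p.2 ^ 2 ∧ p.1 ^ 2 + p.2 ^ 2 < 1},
      φ (p.1 * Real.sqrt (-2 * Real.log (p.1 ^ 2 + p.2 ^ 2) / (p.1 ^ 2 + p.2 ^ 2)),
       p.2 * Real.sqrt (-2 * Real.log (p.1 ^ 2 + p.2 ^ 2) / (p.1 ^ 2 + p.2 ^ 2))) =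
    ENNReal.ofReal Real.pi * ∫⁻ p, φ p ∂((gaussianReal 0 1).prod (gaussianReal 0 1)) := by
  have hD : MeasurableSet {p : ℝ × ℝ | 0 < p.1 ^ 2 + p.2 ^ 2 ∧ p.1 ^ 2 + p.2 ^ 2 < 1} :=
    MeasurableSet.inter (s₁ := {p : ℝ × ℝ | 0 < p.1 ^ 2 + p.2 ^ 2})
      (s₂ := {p : ℝ × ℝ | p.1 ^ 2 + p.2 ^ 2 < 1})
      (measurableSet_lt (by fun_prop) (by fun_prop))
      (measurableSet_lt (by fun_prop) (by fun_prop))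
  have hpdf := measurable_gaussianPDF 0 1
  rw [gaussianReal_of_var_ne_zero _ one_ne_zero, prod_withDensity hpdf hpdf,
    lintegral_withDensity_eq_lintegral_mul _ (by fun_prop) hφ, ← lintegral_const_mul _
      (by fun_prop), ← Measure.volume_eq_prod, ← lintegral_indicator hD,
    lintegral_polar _ (by apply Measurable.indicator _ hD; fun_prop),
    lintegral_polar _ (by fun_prop)]
  refine lintegral_congr fun θ => ?_
  have h1 := marsaglia_one_dim (fun ρ => φ (ρ * Real.cos θ, ρ * Real.sin θ))
  have hs : ∀ r : ℝ, (r * Real.cos θ) ^ 2 + (r * Real.sin θ) ^ 2 = r ^ 2 := fun r => by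
    linear_combination r ^ 2 * Real.cos_sq_add_sin_sq θ
  trans ∫⁻ r in Set.Ioo (0:ℝ) 1, ENNReal.ofReal r *
      φ (Real.sqrt (-2 * Real.log (r ^ 2)) * Real.cos θ,
        Real.sqrt (-2 * Real.log (r ^ 2)) * Real.sin θ)
  · rw [← lintegral_indicator measurableSet_Ioi, ← lintegral_indicator measurableSet_Ioo]
    refine lintegral_congr fun r => ?_
    by_cases hr : 0 < r
    · by_cases hr1 : r < 1
      · have hsq : r ^ 2 < 1 := by nlinarith
        have hsq0 : 0 < r ^ 2 := by positivity
        rw [Set.indicator_of_mem (show r ∈ Set.Ioi (0:ℝ) from hr),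
          Set.indicator_of_mem (show r ∈ Set.Ioo (0:ℝ) 1 from ⟨hr, hr1⟩),
          Set.indicator_of_mem (by simp only [Set.mem_ofPred_eq, hs]; exact ⟨hsq0, hsq⟩)]
        simp only [hs]
        have e : r * Real.sqrt (-2 * Real.log (r ^ 2) / r ^ 2)
            = Real.sqrt (-2 * Real.log (r ^ 2)) := by
          rw [Real.sqrt_div' _ hsq0.le, Real.sqrt_sq hr.le]
          field_simp
        rw [← e]
        congr 3 <;> ring
      · have hsq : ¬ r ^ 2 < 1 := by nlinarith
        rw [Set.indicator_of_mem (show r ∈ Set.Ioi (0:ℝ) from hr),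
          Set.indicator_of_notMem (show r ∉ Set.Ioo (0:ℝ) 1 from fun h => hr1 h.2),
          Set.indicator_of_notMem (by simp only [Set.mem_ofPred_eq, hs]; exact fun h => hsq h.2),
          mul_zero]
    · rw [Set.indicator_of_notMem (show r ∉ Set.Ioi (0:ℝ) from hr),
        Set.indicator_of_notMem (show r ∉ Set.Ioo (0:ℝ) 1 from fun h => hr h.1)]
  · rw [h1]
    refine lintegral_congr fun ρ => ?_
    congr 1
    simp only [Pi.mul_apply, gaussianPDF]
    rw [← mul_assoc, ← ENNReal.ofReal_mul (gaussianPDFReal_nonneg _ _ _),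
      ← ENNReal.ofReal_mul Real.pi_pos.le]
    congr 2
    simp only [gaussianPDFReal, NNReal.coe_one, mul_one, sub_zero]
    rw [mul_mul_mul_comm, ← Real.exp_add, ← mul_inv, Real.mul_self_sqrt (by positivity),
      ← add_div, ← neg_add, hs]
    field_simp


/-- **Correctness of Marsaglia's polar method.** Let `D` be the punctured open unit
disk in `ℝ²` and let `μ` be the uniform probability measure on `D` (normalized
Lebesgue measure restricted to `D`). The map
`T(u₁,u₂) = (u₁√(−2 ln s / s), u₂√(−2 ln s / s))` with `s = u₁² + u₂²` pushes `μ`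
forward to the standard two-dimensional Gaussian measure, i.e. the product of two
Gaussian measures on `ℝ` each with mean `0` and variance `1`. -/
theorem marsaglia_polar_method :
    let D : Set (ℝ × ℝ) := {p | 0 < p.1 ^ 2 + p.2 ^ 2 ∧ p.1 ^ 2 + p.2 ^ 2 < 1}
    let μ : Measure (ℝ × ℝ) := (volume D)⁻¹ • volume.restrict D
    let T : ℝ × ℝ → ℝ × ℝ := fun p =>
      (p.1 * Real.sqrt (-2 * Real.log (p.1 ^ 2 + p.2 ^ 2) / (p.1 ^ 2 + p.2 ^ 2)),
       p.2 * Real.sqrt (-2 * Real.log (p.1 ^ 2 + p.2 ^ 2) / (p.1 ^ 2 + p.2 ^ 2)))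
    μ.map T = (gaussianReal 0 1).prod (gaussianReal 0 1) := by
  intro D μ T
  have hT : Measurable T := by fun_prop
  have hvol : volume D = ENNReal.ofReal Real.pi := by
    have := marsaglia_key (fun _ => 1) measurable_const
    simpa using this
  refine Measure.ext_of_lintegral _ fun φ hφ => ?_
  rw [lintegral_map hφ hT, lintegral_smul_measure, hvol, smul_eq_mul]
  have := marsaglia_key φ hφ
  change ∫⁻ p in D, φ (T p) = _ at this
  rw [this, ← mul_assoc, ENNReal.inv_mul_cancel (by simpa using Real.pi_pos) ENNReal.ofReal_ne_top,
    one_mul]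
end

section
/- For every real z ≠ 0, z·coth(z) − 1 = 2·∑_{k=1}^∞ z²/(π²k² + z²), where the series on the right converges. (Here coth z = cosh z / sinh z.) -/
/-- **Partial-fraction expansion of the hyperbolic cotangent.** For every real
`z ≠ 0`, the series `∑_{k≥1} z²/(π²k² + z²)` converges, with sum
`(z·coth z − 1)/2` where `coth z = cosh z / sinh z`; equivalently
`z coth z − 1 = 2 ∑_{k=1}^∞ z²/(π²k² + z²)`. -/
theorem coth_partial_fraction (z : ℝ) (hz : z ≠ 0) :
    HasSum (fun k : ℕ =>
        z ^ 2 / (Real.pi ^ 2 * ((k : ℝ) + 1) ^ 2 + z ^ 2))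
      ((z * (Real.cosh z / Real.sinh z) - 1) / 2) := by
  have hpi : (Real.pi : ℂ) ≠ 0 := Complex.ofReal_ne_zero.mpr Real.pi_ne_zero
  have hzc : (z : ℂ) ≠ 0 := Complex.ofReal_ne_zero.mpr hz
  have hI := Complex.I_ne_zero
  have hsh : Complex.sinh (z : ℂ) ≠ 0 := by
    rw [← Complex.ofReal_sinh]
    exact Complex.ofReal_ne_zero.mpr (fun h => hz (Real.sinh_eq_zero.mp h))
  obtain ⟨x, hxdef⟩ : ∃ x : ℂ, x = ((z / Real.pi : ℝ) : ℂ) * Complex.I := ⟨_, rfl⟩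
  have hx : x ∈ Complex.integerComplement := by
    rintro ⟨n, hn⟩
    have h := congrArg Complex.im hn
    rw [hxdef] at h
    have h2 : z / Real.pi = 0 := by
      rw [Complex.im_ofReal_mul, Complex.I_im, mul_one, Complex.intCast_im] at h
      exact h.symm
    exact div_ne_zero hz Real.pi_ne_zero h2
  have hx0 : x ≠ 0 := Complex.integerComplement.ne_zero hx
  have hpx : (Real.pi : ℂ) * x = z * Complex.I := by
    rw [hxdef]; push_cast; field_simp
  have hs := ((summable_cotTerm hx).hasSum_iff_tendsto_nat.mpr
    (tendsto_logDeriv_euler_cot_sub hx)).mul_left (x / 2)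
  rw [← Complex.hasSum_ofReal]
  convert hs using 1
  · rfl
  · funext k
    have hd : (Real.pi : ℂ) ^ 2 * ((k : ℂ) + 1) ^ 2 + (z : ℂ) ^ 2 ≠ 0 := by
      have : Real.pi ^ 2 * ((k : ℝ) + 1) ^ 2 + z ^ 2 ≠ 0 := by positivity
      exact_mod_cast this
    have hx2 : (Real.pi : ℂ) ^ 2 * x ^ 2 = - (z : ℂ) ^ 2 := by
      rw [← mul_pow, hpx, mul_pow, Complex.I_sq]; ring
    have hd2 : (x + ((k : ℂ) + 1)) * (x - (k + 1)) ≠ 0 := by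
      intro h
      apply hd
      linear_combination (-(Real.pi : ℂ) ^ 2) * h + hx2
    rw [cotTerm_identity hx]
    push_cast
    rw [div_eq_iff hd]
    have h3 : (z : ℂ) ^ 2 * ((x + ((k : ℂ) + 1)) * (x - (k + 1))) =
        x ^ 2 * ((Real.pi : ℂ) ^ 2 * ((k : ℂ) + 1) ^ 2 + (z : ℂ) ^ 2) := by
      linear_combination (-((k : ℂ) + 1) ^ 2) * hx2
    refine (eq_div_of_mul_eq hd2 h3).trans ?_
    ring
  · rw [hpx, Complex.cot, Complex.cos_mul_I, Complex.sin_mul_I]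
    push_cast
    have : x / 2 * ((Real.pi : ℂ) * (Complex.cosh z / (Complex.sinh z * Complex.I)) - 1 / x)
        = ((Real.pi * x) * (Complex.cosh z / (Complex.sinh z * Complex.I)) - 1) / 2 := by
      field_simp
    rw [this, hpx]
    field_simp
end

section
/- Let h > 0 and a ∈ ℝ. Then for every real ξ ≠ 0, exp(−(a²/2)·((hξ/2)·coth(hξ/2) − 1)) = exp(−a²·∑_{k=1}^∞ ξ²/((2πk/h)² + ξ²)), where the series on the right converges. (This expresses the factor φ_Y(ξ) of Lévy's conditional characteristic function of the Lévy area as an infinite product of compound Poisson characteristic functions.) -/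
open Complex in
lemma levy_aux (y : ℝ) (hy : y ≠ 0) :
    HasSum (fun k : ℕ => y ^ 2 / (((k : ℝ) + 1) ^ 2 + y ^ 2))
      ((Real.pi * y * (Real.cosh (Real.pi * y) / Real.sinh (Real.pi * y)) - 1) / 2) := by
  have hyC : (y : ℂ) ≠ 0 := by exact_mod_cast hy
  have hx : (y * I : ℂ) ∈ Complex.integerComplement := by
    rintro ⟨n, hn⟩
    have := congrArg Complex.im hn
    simp at this
    exact hy this.symm
  have h1 : HasSum (fun n => cotTerm (y * I) n)
      (Real.pi * Complex.cot (Real.pi * (y * I)) - 1 / (y * I)) :=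
    (Summable.hasSum_iff_tendsto_nat (summable_cotTerm hx)).mpr
      (tendsto_logDeriv_euler_cot_sub hx)
  have h2 := h1.mul_left ((y * I : ℂ) / 2)
  rw [← Complex.hasSum_ofReal]
  have hf : (fun k : ℕ => ((y ^ 2 / (((k : ℝ) + 1) ^ 2 + y ^ 2) : ℝ) : ℂ)) =
      fun i => (y * I : ℂ) / 2 * cotTerm (y * I) i := by
    funext k
    rw [cotTerm_identity hx]
    have hpos : ((k : ℝ) + 1) ^ 2 + y ^ 2 ≠ 0 := by positivity
    have hposC : ((k : ℂ) + 1) ^ 2 + (y : ℂ) ^ 2 ≠ 0 := by exact_mod_cast hpos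
    have e : ((y * I : ℂ) + (k + 1)) * (y * I - (k + 1)) = -(((k : ℂ) + 1) ^ 2 + (y : ℂ) ^ 2) := by
      linear_combination (y : ℂ) ^ 2 * I_sq
    rw [e]
    push_cast
    field_simp
    linear_combination I_sq
  have hv : (((Real.pi * y * (Real.cosh (Real.pi * y) / Real.sinh (Real.pi * y)) - 1) / 2 : ℝ) : ℂ)
      = (y * I : ℂ) / 2 * (Real.pi * Complex.cot (Real.pi * (y * I)) - 1 / (y * I)) := by
    have hs : Real.sinh (Real.pi * y) ≠ 0 := by
      rw [Ne, Real.sinh_eq_zero]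
      exact mul_ne_zero Real.pi_ne_zero hy
    have hsC : Complex.sinh (Real.pi * y) ≠ 0 := by exact_mod_cast hs
    have hI := I_ne_zero
    rw [Complex.cot_eq_cos_div_sin, ← mul_assoc, Complex.cos_mul_I, Complex.sin_mul_I]
    push_cast
    field_simp
  rw [hf, hv]
  exact h2

/-- **Rydén–Wiktorsson's compound Poisson representation of `φ_Y`.** For `h > 0`,
`a ∈ ℝ` and real `ξ ≠ 0`, the series `∑_{k≥1} ξ²/((2πk/h)² + ξ²)` converges to
some `S`, and
`exp(−(a²/2)((hξ/2)·coth(hξ/2) − 1)) = exp(−a²·S)`,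
where `coth z = cosh z / sinh z`. -/
theorem levy_area_phiY_poisson_rep (h : ℝ) (hh : 0 < h) (a : ℝ)
    (ξ : ℝ) (hξ : ξ ≠ 0) :
    ∃ S : ℝ,
      HasSum (fun k : ℕ =>
          ξ ^ 2 / ((2 * Real.pi * ((k : ℝ) + 1) / h) ^ 2 + ξ ^ 2)) S ∧
      Real.exp (-(a ^ 2 / 2) *
          ((h * ξ / 2) * (Real.cosh (h * ξ / 2) / Real.sinh (h * ξ / 2)) - 1))
        = Real.exp (-a ^ 2 * S) := by
  have hy : h * ξ / (2 * Real.pi) ≠ 0 := by positivity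
  have e : Real.pi * (h * ξ / (2 * Real.pi)) = h * ξ / 2 := by
    have := Real.pi_ne_zero
    field_simp
  have H := levy_aux _ hy
  rw [e] at H
  have hf : (fun k : ℕ => ξ ^ 2 / ((2 * Real.pi * ((k : ℝ) + 1) / h) ^ 2 + ξ ^ 2)) =
      fun k : ℕ => (h * ξ / (2 * Real.pi)) ^ 2 / (((k : ℝ) + 1) ^ 2 + (h * ξ / (2 * Real.pi)) ^ 2) := by
    funext k
    have hp := Real.pi_pos
    field_simp
  refine ⟨_, hf ▸ H, ?_⟩
  congr 1
  ring
end
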